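/- Let m ≥ 2 and N ≥ 1. For every m-homogeneous polynomial P(z) = ∑_{|α|=m} c_α z^α in N complex variables one has (∑_{|α|=m} |c_α|^{2m/(m+1)})^{(m+1)/(2m)} ≤ 2^{m/2} · m^{(m-1)/(2m)} · (m/(m-1))^{m-1} · sup_{z ∈ closed unit polydisc of ℂ^N} |P(z)|. -/

import Mathlib

open Finset

lemma bh_bessel {h : ℂ → ℂ} (hh : DiffContOnCl ℂ h (Metric.ball 0 1)) (M : ℕ) :
    ∑ n ∈ range M, ‖iteratedDeriv n h 0 / (n.factorial : ℂ)‖ ^ 2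
      ≤ Real.circleAverage (fun z => ‖h z‖ ^ 2) 0 1 := by
  have hcont : Continuous (fun θ : ℝ => h (circleMap 0 1 θ)) := by
    have h1 := hh.continuousOn_ball
    refine h1.comp_continuous (continuous_circleMap 0 1) ?_
    intro θ
    simp [Metric.mem_closedBall, circleMap]
  have hab : (0 : ℝ) < 2 * Real.pi := Real.two_pi_pos
  have hL2 : MeasureTheory.MemLp (fun θ : ℝ => h (circleMap 0 1 θ)) 2
      (MeasureTheory.volume.restrict (Set.Ioc 0 (2 * Real.pi))) := by
    obtain ⟨C, hC⟩ := (isCompact_Icc (a := (0:ℝ)) (b := 2 * Real.pi)).exists_bound_of_continuousOn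
      hcont.continuousOn
    refine MeasureTheory.MemLp.of_bound hcont.aestronglyMeasurable C ?_
    refine (MeasureTheory.ae_restrict_iff' measurableSet_Ioc).2 (Filter.Eventually.of_forall ?_)
    intro x hx
    exact hC x ⟨hx.1.le, hx.2⟩
  have hs := hasSum_sq_fourierCoeffOn hab hL2
  have hcoef : ∀ n : ℕ, fourierCoeffOn hab (fun θ : ℝ => h (circleMap 0 1 θ)) (n : ℤ)
      = iteratedDeriv n h 0 / (n.factorial : ℂ) := by
    intro n
    have h1 := hh.circleIntegral_one_div_sub_center_pow_smul one_pos n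
    have h2 := Real.circleAverage_eq_circleIntegral (c := 0) (R := 1)
      (f := fun z : ℂ => (1 / z ^ n) * h z) one_ne_zero
    have h3 : (∮ z in C(0, 1), (z - 0)⁻¹ • ((1 / z ^ n) * h z))
        = ∮ z in C(0, 1), (1 / (z - 0) ^ (n + 1)) • h z := by
      congr 1
      funext z
      simp only [sub_zero, smul_eq_mul, pow_succ]
      field_simp
    rw [h3, h1] at h2
    rw [fourierCoeffOn_eq_integral]
    have h4 : (2 * Real.pi * Complex.I : ℂ)⁻¹ • ((2 * Real.pi * Complex.I / (n.factorial : ℂ)) • iteratedDeriv n h 0)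
       = iteratedDeriv n h 0 / (n.factorial : ℂ) := by
      have := Complex.two_pi_I_ne_zero
      simp only [smul_eq_mul]
      field_simp
    rw [h4] at h2
    rw [← h2, Real.circleAverage]
    simp only [sub_zero, one_div]
    congr 1
    refine intervalIntegral.integral_congr ?_
    intro θ _
    simp only [smul_eq_mul]
    congr 1
    rw [fourier_coe_apply]
    simp only [circleMap, zero_add, Complex.ofReal_one, one_mul, ← Complex.exp_nat_mul, ← Complex.exp_neg]
    congr 1
    push_cast
    have : (Real.pi : ℂ) ≠ 0 := by exact_mod_cast Real.pi_ne_zero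
    field_simp
    ring
  have h5 := sum_le_hasSum ((range M).map ⟨fun n : ℕ => (n : ℤ), Nat.cast_injective⟩)
    (fun i _ => by positivity) hs
  rw [Finset.sum_map] at h5
  simp only [Function.Embedding.coeFn_mk, hcoef] at h5
  simpa [Real.circleAverage] using h5

def BHFac (f : ℂ → ℂ) : Prop :=
  ∃ g k : ℂ → ℂ, DiffContOnCl ℂ g (Metric.ball 0 1) ∧ DiffContOnCl ℂ k (Metric.ball 0 1) ∧
    (∀ z ∈ Metric.ball (0:ℂ) 1, f z = g z * k z) ∧
    (∀ z : ℂ, ‖z‖ = 1 → ‖g z‖ ^ 2 = ‖f z‖) ∧ (∀ z : ℂ, ‖z‖ = 1 → ‖k z‖ ^ 2 = ‖f z‖)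

lemma BHFac.mul {f₁ f₂ : ℂ → ℂ} (h₁ : BHFac f₁) (h₂ : BHFac f₂) :
    BHFac (fun z => f₁ z * f₂ z) := by
  obtain ⟨g, k, hg, hk, hf, hg', hk'⟩ := h₁
  obtain ⟨g₂, k₂, hg₂, hk₂, hf₂, hg₂', hk₂'⟩ := h₂
  refine ⟨fun z => g z * g₂ z, fun z => k z * k₂ z, hg.smul hg₂, hk.smul hk₂, ?_, ?_, ?_⟩
  · intro z hz
    simp only [hf z hz, hf₂ z hz]; ring
  · intro z hz
    rw [norm_mul, mul_pow, hg' z hz, hg₂' z hz, norm_mul]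
  · intro z hz
    rw [norm_mul, mul_pow, hk' z hz, hk₂' z hz, norm_mul]

lemma bh_exists_sq (a : ℂ) : ∃ s : ℂ, s ^ 2 = a := IsAlgClosed.exists_pow_nat_eq a two_pos

lemma BHFac.const (a : ℂ) : BHFac (fun _ => a) := by
  obtain ⟨s, hs⟩ := bh_exists_sq a
  refine ⟨fun _ => s, fun _ => s, diffContOnCl_const, diffContOnCl_const, ?_, ?_, ?_⟩
  · intro z _; rw [← hs]; ring
  · intro z _; rw [← hs, norm_pow]
  · intro z _; rw [← hs, norm_pow]

lemma bh_sqrt_diffCont (w : ℂ) (hw : ‖w‖ ≤ 1) :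
    DiffContOnCl ℂ (fun z : ℂ => Complex.sqrt (1 - w * z)) (Metric.ball 0 1) := by
  refine DiffContOnCl.mk_ball ?_ ?_
  · intro z hz
    refine DifferentiableAt.differentiableWithinAt ?_
    have hz1 : ‖z‖ < 1 := by simpa using hz
    have h1 : ‖w * z‖ < 1 := by
      rw [norm_mul]
      nlinarith [norm_nonneg w, norm_nonneg z]
    have h2 : (1 - w * z) ∈ Complex.slitPlane := by
      left
      have := Complex.re_le_norm (w * z)
      simp only [Complex.sub_re, Complex.one_re]
      linarith
    exact (Complex.differentiableAt_sqrt h2).comp z (f := fun z => 1 - w * z) (by fun_prop)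
  · intro z hz
    refine ContinuousAt.continuousWithinAt ?_
    have hz1 : ‖z‖ ≤ 1 := by simpa using hz
    have h1 : ‖w * z‖ ≤ 1 := by
      rw [norm_mul]
      nlinarith [norm_nonneg w, norm_nonneg z]
    refine ContinuousAt.comp (f := fun z => 1 - w * z) (Complex.continuousAt_sqrt ?_) (by fun_prop)
    left
    have := Complex.re_le_norm (w * z)
    simp only [Complex.sub_re, Complex.one_re]
    linarith

lemma bh_sqrt_sq (a : ℂ) : Complex.sqrt a ^ 2 = a := by
  rw [Complex.sqrt]; exact Complex.cpow_ofNat_inv_pow a 2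

lemma BHFac.sub (w : ℂ) : BHFac (fun z => z - w) := by
  rcases lt_or_ge ‖w‖ 1 with hw | hw
  · have hG := bh_sqrt_diffCont (starRingEnd ℂ w) (by simpa using hw.le)
    have hne : ∀ z : ℂ, ‖z‖ ≤ 1 → 1 - starRingEnd ℂ w * z ≠ 0 := by
      intro z hz h0
      have h1 : starRingEnd ℂ w * z = 1 := (sub_eq_zero.1 h0).symm
      have h2 : ‖starRingEnd ℂ w * z‖ = 1 := by rw [h1]; simp
      rw [norm_mul, RCLike.norm_conj] at h2
      nlinarith [norm_nonneg w, norm_nonneg z]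
    have hB : DiffContOnCl ℂ (fun z : ℂ => (1 - starRingEnd ℂ w * z)⁻¹) (Metric.ball 0 1) := by
      refine DiffContOnCl.inv (Differentiable.diffContOnCl (by fun_prop)) ?_
      intro x hx
      have := Metric.closure_ball_subset_closedBall hx
      exact hne x (by simpa using this)
    have hX : DiffContOnCl ℂ (fun z : ℂ => z - w) (Metric.ball 0 1) :=
      Differentiable.diffContOnCl (by fun_prop)
    have key : ∀ z : ℂ, ‖z‖ = 1 → ‖1 - starRingEnd ℂ w * z‖ = ‖z - w‖ := by
      intro z hz
      have h1 : z * starRingEnd ℂ z = 1 := by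
        rw [Complex.mul_conj, Complex.normSq_eq_norm_sq, hz]; simp
      have h2 : 1 - starRingEnd ℂ w * z = z * starRingEnd ℂ (z - w) := by
        rw [map_sub, mul_sub, h1]; ring
      rw [h2, norm_mul, hz, RCLike.norm_conj, one_mul]
    have key2 : ∀ z : ℂ, ‖z‖ = 1 → ‖Complex.sqrt (1 - starRingEnd ℂ w * z)‖ ^ 2 = ‖z - w‖ := by
      intro z hz
      rw [← norm_pow, bh_sqrt_sq, key z hz]
    refine ⟨_, _, hG, (hX.smul hB).smul hG, ?_, key2, ?_⟩
    · intro z hz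
      have hz1 : ‖z‖ < 1 := by simpa using hz
      have := hne z hz1.le
      have h3 := bh_sqrt_sq (1 - starRingEnd ℂ w * z)
      simp only [smul_eq_mul]
      calc z - w = (z - w) * (1 - starRingEnd ℂ w * z)⁻¹ * (1 - starRingEnd ℂ w * z) := by
            rw [mul_assoc, inv_mul_cancel₀ this, mul_one]
        _ = (z - w) * (1 - starRingEnd ℂ w * z)⁻¹ * (Complex.sqrt (1 - starRingEnd ℂ w * z)) ^ 2 := by
            rw [h3]
        _ = _ := by ring
    · intro z hz
      have := hne z hz.le
      simp only [smul_eq_mul]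
      rw [norm_mul, mul_pow, key2 z hz, norm_mul, norm_inv, key z hz]
      have h4 : ‖z - w‖ ≠ 0 := by rw [← key z hz]; simpa using this
      field_simp
  · have hw0 : w ≠ 0 := by rintro rfl; simp at hw; linarith
    obtain ⟨s, hs⟩ := bh_exists_sq (-w)
    have hG := bh_sqrt_diffCont (w⁻¹) (by rw [norm_inv]; exact inv_le_one_of_one_le₀ hw)
    have hfac : ∀ z : ℂ, z - w = s ^ 2 * (Complex.sqrt (1 - w⁻¹ * z)) ^ 2 := by
      intro z
      rw [hs, bh_sqrt_sq]; field_simp; ring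
    have hGs := (diffContOnCl_const (𝕜 := ℂ) (c := s) (s := Metric.ball (0:ℂ) 1)).smul hG
    refine ⟨_, _, hGs, hGs, ?_, ?_, ?_⟩
    · intro z _
      simp only [smul_eq_mul]
      rw [hfac]; ring
    · intro z _
      simp only [smul_eq_mul]
      rw [hfac, ← norm_pow]; congr 1; ring
    · intro z _
      simp only [smul_eq_mul]
      rw [hfac, ← norm_pow]; congr 1; ring

lemma BHFac.poly (p : Polynomial ℂ) : BHFac (fun z => p.eval z) := by
  have hsp := (IsAlgClosed.splits p).eq_prod_roots
  have h1 : ∀ s : Multiset ℂ, BHFac (fun z => (s.map (fun w => z - w)).prod) := by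
    intro s
    induction s using Multiset.induction with
    | empty => simpa using BHFac.const 1
    | cons w s ih =>
      simpa using (BHFac.sub w).mul ih
  have h2 := (BHFac.const p.leadingCoeff).mul (h1 p.roots)
  convert h2 using 2 with z
  conv_lhs => rw [hsp]
  rw [Polynomial.eval_mul, Polynomial.eval_C, Polynomial.eval_multiset_prod, Multiset.map_map]
  simp

lemma bh_iteratedDeriv_poly (p : Polynomial ℂ) (n : ℕ) :
    iteratedDeriv n (fun z => p.eval z) 0 = n.factorial * p.coeff n := by
  have : ∀ n : ℕ, iteratedDeriv n (fun z => p.eval z) = fun z => (Polynomial.derivative^[n] p).eval z := by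
    intro n
    induction n with
    | zero => simp
    | succ n ih =>
      rw [iteratedDeriv_succ, ih]
      funext z
      rw [Function.iterate_succ_apply']
      simp
  rw [this]
  simp only
  rw [← Polynomial.coeff_zero_eq_eval_zero, Polynomial.coeff_iterate_derivative]
  simp [Nat.descFactorial_self]

lemma bh_carleman (p : Polynomial ℂ) (M : ℕ) :
    ∑ n ∈ range M, ‖p.coeff n‖ ^ 2 / (n + 1)
      ≤ (Real.circleAverage (fun z => ‖p.eval z‖) 0 1) ^ 2 := by
  obtain ⟨g, k, hg, hk, hf, hg', hk'⟩ := BHFac.poly p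
  set G : ℕ → ℝ := fun n => ‖iteratedDeriv n g 0 / (n.factorial : ℂ)‖ with hG
  set K : ℕ → ℝ := fun n => ‖iteratedDeriv n k 0 / (n.factorial : ℂ)‖ with hK
  have hGb := bh_bessel hg M
  have hKb := bh_bessel hk M
  have e1 : Real.circleAverage (fun z => ‖g z‖ ^ 2) 0 1 = Real.circleAverage (fun z => ‖p.eval z‖) 0 1 := by
    refine Real.circleAverage_congr_sphere ?_
    intro z hz
    exact hg' z (by simpa using hz)
  have e2 : Real.circleAverage (fun z => ‖k z‖ ^ 2) 0 1 = Real.circleAverage (fun z => ‖p.eval z‖) 0 1 := by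
    refine Real.circleAverage_congr_sphere ?_
    intro z hz
    exact hk' z (by simpa using hz)
  rw [e1] at hGb
  rw [e2] at hKb
  have hgA : ∀ n : ℕ, ContDiffAt ℂ n g 0 := fun n =>
    (hg.differentiableOn.analyticAt (Metric.ball_mem_nhds 0 one_pos)).contDiffAt
  have hkA : ∀ n : ℕ, ContDiffAt ℂ n k 0 := fun n =>
    (hk.differentiableOn.analyticAt (Metric.ball_mem_nhds 0 one_pos)).contDiffAt
  have hconv : ∀ n : ℕ, p.coeff n = ∑ i ∈ range (n + 1),
      (iteratedDeriv i g 0 / (i.factorial : ℂ)) * (iteratedDeriv (n - i) k 0 / ((n - i).factorial : ℂ)) := by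
    intro n
    have h1 : iteratedDeriv n (fun z => p.eval z) 0 = iteratedDeriv n (g * k) 0 := by
      refine Filter.EventuallyEq.iteratedDeriv_eq n ?_
      filter_upwards [Metric.ball_mem_nhds (0:ℂ) one_pos] with z hz
      exact hf z hz
    rw [bh_iteratedDeriv_poly, iteratedDeriv_mul (hgA n) (hkA n)] at h1
    have hn : (n.factorial : ℂ) ≠ 0 := by exact_mod_cast n.factorial_ne_zero
    rw [← mul_right_inj' hn, h1, Finset.mul_sum]
    refine Finset.sum_congr rfl ?_
    intro i hi
    have hi' : i ≤ n := by simpa [Nat.lt_succ_iff] using hi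
    have h2 : ((n.choose i * i.factorial * (n - i).factorial : ℕ) : ℂ) = n.factorial := by
      rw [Nat.choose_mul_factorial_mul_factorial hi']
    have h3 : (i.factorial : ℂ) ≠ 0 := by exact_mod_cast i.factorial_ne_zero
    have h4 : ((n-i).factorial : ℂ) ≠ 0 := by exact_mod_cast (n-i).factorial_ne_zero
    rw [← h2]
    push_cast
    field_simp
  have hterm : ∀ n : ℕ, ‖p.coeff n‖ ^ 2 / (n + 1) ≤ ∑ i ∈ range (n + 1), G i ^ 2 * K (n - i) ^ 2 := by
    intro n
    have h1 : ‖p.coeff n‖ ≤ ∑ i ∈ range (n + 1), G i * K (n - i) := by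
      rw [hconv n]
      refine (norm_sum_le _ _).trans ?_
      refine Finset.sum_le_sum ?_
      intro i _
      rw [norm_mul]
    have h2 : (∑ i ∈ range (n + 1), G i * K (n - i)) ^ 2 ≤ (n + 1) * ∑ i ∈ range (n + 1), (G i * K (n - i)) ^ 2 := by
      have := sq_sum_le_card_mul_sum_sq (s := range (n + 1)) (f := fun i => G i * K (n - i))
      simpa using this
    rw [div_le_iff₀ (by positivity)]
    calc ‖p.coeff n‖ ^ 2 ≤ (∑ i ∈ range (n + 1), G i * K (n - i)) ^ 2 := by gcongr
      _ ≤ _ := h2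
      _ = _ := by rw [mul_comm]; simp only [mul_pow]
  calc ∑ n ∈ range M, ‖p.coeff n‖ ^ 2 / (n + 1)
      ≤ ∑ n ∈ range M, ∑ i ∈ range (n + 1), G i ^ 2 * K (n - i) ^ 2 := Finset.sum_le_sum fun n _ => hterm n
    _ ≤ ∑ i ∈ range M, ∑ j ∈ range M, G i ^ 2 * K j ^ 2 := by
        rw [Finset.sum_sigma', ← Finset.sum_product']
        have hinj : Set.InjOn (fun x : (_ : ℕ) × ℕ => (x.2, x.1 - x.2))
            ((range M).sigma fun n => range (n + 1)) := by
          rintro ⟨a, b⟩ hab ⟨c, d⟩ hcd h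
          simp at hab hcd h
          obtain ⟨h1, h2⟩ := h
          have : a = c := by omega
          subst this; subst h1; rfl
        rw [← Finset.sum_image (g := fun x : (_ : ℕ) × ℕ => (x.2, x.1 - x.2)) (f := fun x : ℕ × ℕ => G x.1 ^ 2 * K x.2 ^ 2) hinj]
        refine Finset.sum_le_sum_of_subset_of_nonneg ?_ ?_
        · intro x hx
          simp only [Finset.mem_image, Finset.mem_sigma, Finset.mem_range, Finset.mem_product] at hx ⊢
          obtain ⟨⟨a, b⟩, ⟨h1, h2⟩, rfl⟩ := hx
          simp at h1 h2 ⊢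
          omega
        · intro i _ _
          positivity
    _ = (∑ i ∈ range M, G i ^ 2) * (∑ j ∈ range M, K j ^ 2) := by
        rw [Finset.sum_mul_sum]
    _ ≤ _ := by
        rw [sq]
        exact mul_le_mul hGb hKb (Finset.sum_nonneg fun i _ => by positivity)
          ((Finset.sum_nonneg fun i _ => by positivity).trans hGb)

lemma bh_vec {L J : Type} [Fintype L] [Fintype J] (D : ℕ) (a : L → J → Fin D → ℂ) (C : ℝ)
    (h : ∀ z : ℂ, ‖z‖ = 1 → ∑ l, √(∑ j, ‖∑ n, a l j n * z ^ (n : ℕ)‖ ^ 2) ≤ C) :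
    ∑ l, √(∑ j, ∑ n, ‖a l j n‖ ^ 2 / 2 ^ (n : ℕ)) ≤ C := by
  set p : L → J → Polynomial ℂ := fun l j => ∑ n : Fin D, Polynomial.monomial (n : ℕ) (a l j n) with hp
  have hpe : ∀ l j z, (p l j).eval z = ∑ n, a l j n * z ^ (n : ℕ) := by
    intro l j z
    simp [hp, Polynomial.eval_finsetSum]
  have hpc : ∀ l j (n : Fin D), (p l j).coeff n = a l j n := by
    intro l j n
    simp only [hp, Polynomial.finsetSum_coeff, Polynomial.coeff_monomial]
    rw [Finset.sum_eq_single n]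
    · simp
    · intro b _ hb
      rw [if_neg]
      intro h
      exact hb (Fin.ext h)
    · simp
  have hci : ∀ f : ℂ → ℝ, Continuous f → CircleIntegrable f 0 1 := fun f hf =>
    hf.continuousOn.circleIntegrable zero_le_one
  have hcp : ∀ l j, Continuous (fun z => ‖(p l j).eval z‖) := fun l j => (p l j).continuous.norm
  set A : L → J → ℝ := fun l j => Real.circleAverage (fun z => ‖(p l j).eval z‖) 0 1 with hA
  have hcs : ∀ l, Continuous (fun z => √(∑ j, ‖(p l j).eval z‖ ^ 2)) := by
    intro l
    refine Continuous.sqrt ?_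
    exact continuous_finsetSum _ fun j _ => (hcp l j).pow 2
  have h1 : ∀ l j, ∑ n, ‖a l j n‖ ^ 2 / 2 ^ (n : ℕ) ≤ A l j ^ 2 := by
    intro l j
    refine le_trans ?_ (bh_carleman (p l j) D)
    rw [← Fin.sum_univ_eq_sum_range (fun n => ‖(p l j).coeff n‖ ^ 2 / ((n:ℝ) + 1)) D]
    refine Finset.sum_le_sum fun n _ => ?_
    rw [hpc]
    have : ((n : ℕ) : ℝ) + 1 ≤ 2 ^ (n : ℕ) := by
      exact_mod_cast (Nat.lt_two_pow_self : (n : ℕ) < 2 ^ (n : ℕ))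
    gcongr
  have h2 : ∀ l, √(∑ j, A l j ^ 2) ≤ Real.circleAverage (fun z => √(∑ j, ‖(p l j).eval z‖ ^ 2)) 0 1 := by
    intro l
    set R := √(∑ j, A l j ^ 2) with hR
    have hR2 : R ^ 2 = ∑ j, A l j ^ 2 := Real.sq_sqrt (Finset.sum_nonneg fun j _ => by positivity)
    have h3 : R ^ 2 = Real.circleAverage (fun z => ∑ j, A l j * ‖(p l j).eval z‖) 0 1 := by
      rw [Real.circleAverage_fun_sum (f := fun j z => A l j * ‖(p l j).eval z‖)
        (fun j _ => hci _ (continuous_const.mul (hcp l j))), hR2]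
      refine Finset.sum_congr rfl fun j _ => ?_
      have := Real.circleAverage_fun_smul (a := A l j) (f := fun z => ‖(p l j).eval z‖) (c := 0) (R := 1)
      simp only [smul_eq_mul] at this
      rw [this, sq]
    have h4 : R ^ 2 ≤ R * Real.circleAverage (fun z => √(∑ j, ‖(p l j).eval z‖ ^ 2)) 0 1 := by
      have := Real.circleAverage_fun_smul (a := R) (f := fun z => √(∑ j, ‖(p l j).eval z‖ ^ 2)) (c := 0) (R := 1)
      simp only [smul_eq_mul] at this
      rw [← this, h3]
      refine Real.circleAverage_mono (hci _ ?_) (hci _ (continuous_const.mul (hcs l))) ?_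
      · exact continuous_finsetSum _ fun j _ => continuous_const.mul (hcp l j)
      · intro z _
        exact Real.sum_mul_le_sqrt_mul_sqrt _ _ _
    rcases (Real.sqrt_nonneg (∑ j, A l j ^ 2)).eq_or_lt with h0 | h0
    · rw [hR, ← h0]
      refine Real.circleAverage_nonneg_of_nonneg ?_
      intro z _
      exact Real.sqrt_nonneg _
    · rw [← hR] at h0
      rw [sq] at h4
      exact le_of_mul_le_mul_left h4 h0
  calc ∑ l, √(∑ j, ∑ n, ‖a l j n‖ ^ 2 / 2 ^ (n : ℕ))
      ≤ ∑ l, √(∑ j, A l j ^ 2) := by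
        refine Finset.sum_le_sum fun l _ => Real.sqrt_le_sqrt ?_
        exact Finset.sum_le_sum fun j _ => h1 l j
    _ ≤ ∑ l, Real.circleAverage (fun z => √(∑ j, ‖(p l j).eval z‖ ^ 2)) 0 1 :=
        Finset.sum_le_sum fun l _ => h2 l
    _ = Real.circleAverage (fun z => ∑ l, √(∑ j, ‖(p l j).eval z‖ ^ 2)) 0 1 := by
        rw [Real.circleAverage_fun_sum (fun l _ => hci _ (hcs l))]
    _ ≤ C := by
        refine Real.circleAverage_mono_on_of_le_circle (hci _ (continuous_finsetSum _ fun l _ => hcs l)) ?_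
        intro z hz
        simp only [hpe]
        exact h z (by simpa using hz)

lemma bh_sum_cons {M : Type*} [AddCommMonoid M] {N D : ℕ} (F : (Fin (N + 1) → Fin D) → M) :
    ∑ α, F α = ∑ j : Fin N → Fin D, ∑ n : Fin D, F (Fin.cons n j) := by
  rw [← (Fin.consEquiv fun _ => Fin D).sum_comp F, Fintype.sum_prod_type_right]
  rfl

lemma bh_multi {L : Type} [Fintype L] (D : ℕ) : ∀ (N : ℕ) (c : L → (Fin N → Fin D) → ℂ) (C : ℝ),
    (∀ z : Fin N → ℂ, (∀ j, ‖z j‖ = 1) →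
      ∑ l, ‖∑ α, c l α * ∏ j, z j ^ (α j : ℕ)‖ ≤ C) →
    ∑ l, √(∑ α, ‖c l α‖ ^ 2 / 2 ^ (∑ j, (α j : ℕ))) ≤ C := by
  intro N
  induction N with
  | zero =>
    intro c C h
    have := h (fun _ => 1) (by simp)
    simpa using this
  | succ N ih =>
    intro c C h
    set a : L → (Fin N → Fin D) → Fin D → ℂ := fun l j n =>
      c l (Fin.cons n j) * ((√(2 ^ (∑ i, (j i : ℕ))) : ℝ) : ℂ)⁻¹ with ha
    have hn : ∀ j : Fin N → Fin D, ‖((√(2 ^ (∑ i, (j i : ℕ))) : ℝ) : ℂ)⁻¹‖ ^ 2 = (2 ^ (∑ i, (j i : ℕ)))⁻¹ := by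
      intro j
      rw [norm_inv, inv_pow, Complex.norm_real, Real.norm_eq_abs, sq_abs, Real.sq_sqrt (by positivity)]
    have key := bh_vec D a C ?_
    · convert key using 4 with l _
      rw [bh_sum_cons]
      refine Finset.sum_congr rfl fun j _ => Finset.sum_congr rfl fun n _ => ?_
      simp only [ha]
      rw [norm_mul, mul_pow, hn, Fin.sum_univ_succ]
      simp only [Fin.cons_zero, Fin.cons_succ, pow_add]
      field_simp
    · intro w hw
      have h1 := ih (fun l j => ∑ n, c l (Fin.cons n j) * w ^ (n : ℕ)) C ?_
      · convert h1 using 4 with l _ j _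
        have : ∑ n, a l j n * w ^ (n : ℕ) = (∑ n, c l (Fin.cons n j) * w ^ (n : ℕ)) * ((√(2 ^ (∑ i, (j i : ℕ))) : ℝ) : ℂ)⁻¹ := by
          rw [Finset.sum_mul]
          refine Finset.sum_congr rfl fun n _ => ?_
          simp only [ha]; ring
        rw [this, norm_mul, mul_pow, hn]
        rfl
      · intro z hz
        have h2 := h (Fin.cons w z) (by
          intro j
          refine Fin.cases ?_ ?_ j
          · simpa using hw
          · intro i; simpa using hz i)
        convert h2 using 3 with l _
        rw [bh_sum_cons]
        refine Finset.sum_congr rfl fun j _ => ?_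
        rw [Finset.sum_mul]
        refine Finset.sum_congr rfl fun n _ => ?_
        rw [Fin.prod_univ_succ]
        simp only [Fin.cons_zero, Fin.cons_succ]
        ring

lemma bh_holder (m N : ℕ) (hm : 1 ≤ m) (x : (Fin N → ℕ) → ℝ) (hx : ∀ α, 0 ≤ x α)
    (s : Fin N → ℝ) (hs0 : ∀ l, 0 ≤ s l)
    (hs : ∀ l, ∑ α ∈ Finset.Nat.antidiagonalTuple N m, ((α l : ℝ) / m) ^ 2 * x α ^ 2 = s l ^ 2) :
    (∑ α ∈ Finset.Nat.antidiagonalTuple N m, x α ^ ((2 * m : ℝ) / (m + 1))) ^ (((m : ℝ) + 1) / (2 * m))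
      ≤ √m * ∑ l, s l := by
  have hm0 : (0 : ℝ) < m := by exact_mod_cast hm
  set T := Finset.Nat.antidiagonalTuple N m with hT
  set S := ∑ l, s l with hS
  have hS0 : 0 ≤ S := Finset.sum_nonneg fun l _ => hs0 l
  set U : (Fin N → ℕ) → ℝ := fun α => ∑ l, ((α l : ℝ) / m) * (x α ^ 2 / s l) with hU
  set V : (Fin N → ℕ) → ℝ := fun α => ∏ l, s l ^ α l with hV
  have hU0 : ∀ α, 0 ≤ U α := fun α => Finset.sum_nonneg fun l _ =>
    mul_nonneg (by positivity) (div_nonneg (by positivity) (hs0 l))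
  have hV0 : ∀ α, 0 ≤ V α := fun α => Finset.prod_nonneg fun l _ => pow_nonneg (hs0 l) _
  have hzero : ∀ α ∈ T, ∀ l, s l = 0 → α l ≠ 0 → x α = 0 := by
    intro α hα l hl hαl
    have h1 := hs l
    rw [hl, zero_pow two_ne_zero, Finset.sum_eq_zero_iff_of_nonneg (fun α _ => by positivity)] at h1
    have h2 := h1 α hα
    have : (α l : ℝ) ≠ 0 := by exact_mod_cast hαl
    have h3 : ((α l : ℝ) / m) ^ 2 ≠ 0 := by positivity
    simpa [h3, hm0.ne', this] using h2
  have hsum : ∀ α ∈ T, ∑ l, α l = m := fun α hα => Finset.Nat.mem_antidiagonalTuple.1 hα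
  have hpt : ∀ α ∈ T, x α ^ (2 * m) ≤ U α ^ m * V α := by
    intro α hα
    have e1 : x α ^ (2 * m) = (∏ l, (x α ^ 2 / s l) ^ α l) * V α := by
      rw [hV, ← Finset.prod_mul_distrib]
      rw [pow_mul, ← hsum α hα, ← Finset.prod_pow_eq_pow_sum]
      refine Finset.prod_congr rfl fun l _ => ?_
      rw [← mul_pow]
      by_cases h0 : α l = 0
      · simp [h0]
      · by_cases h1 : s l = 0
        · rw [hzero α hα l h1 h0]; simp
        · rw [div_mul_cancel₀ _ h1]
    rw [e1]
    refine mul_le_mul_of_nonneg_right ?_ (hV0 α)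
    have h2 := Real.geom_mean_le_arith_mean_weighted Finset.univ (fun l => (α l : ℝ) / m)
      (fun l => x α ^ 2 / s l) (fun l _ => by positivity) (by
        rw [← Finset.sum_div]
        have : (∑ l, (α l : ℝ)) = m := by exact_mod_cast hsum α hα
        rw [this]; field_simp) (fun l _ => div_nonneg (by positivity) (hs0 l))
    have h3 : (∏ l, (x α ^ 2 / s l) ^ α l) = (∏ l, (x α ^ 2 / s l) ^ ((α l : ℝ) / m)) ^ m := by
      rw [← Finset.prod_pow]
      refine Finset.prod_congr rfl fun l _ => ?_
      have hb : 0 ≤ x α ^ 2 / s l := div_nonneg (by positivity) (hs0 l)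
      rw [← Real.rpow_natCast (_ ^ ((α l : ℝ) / m)), ← Real.rpow_mul hb, div_mul_cancel₀ _ hm0.ne',
        Real.rpow_natCast]
    rw [h3]
    exact pow_le_pow_left₀ (Finset.prod_nonneg fun l _ =>
      Real.rpow_nonneg (div_nonneg (by positivity) (hs0 l)) _) h2 m
  have hUs : ∑ α ∈ T, U α ≤ m * S := by
    rw [hU, Finset.sum_comm, hS, Finset.mul_sum]
    refine Finset.sum_le_sum fun l _ => ?_
    rcases (hs0 l).eq_or_lt with h0 | h0
    · rw [← h0]; simp
    · have h1 : ∑ α ∈ T, (α l : ℝ) / m * (x α ^ 2 / s l) ≤ ∑ α ∈ T, m / s l * (((α l : ℝ) / m) ^ 2 * x α ^ 2) := by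
        refine Finset.sum_le_sum fun α _ => ?_
        have h2 : (α l : ℝ) ≤ (α l : ℝ) ^ 2 := by
          exact_mod_cast Nat.le_self_pow two_ne_zero (α l)
        calc (α l : ℝ) / m * (x α ^ 2 / s l) ≤ (α l : ℝ) ^ 2 / m * (x α ^ 2 / s l) := by gcongr
          _ = _ := by field_simp
      refine h1.trans ?_
      rw [← Finset.mul_sum, hs l]
      apply le_of_eq
      field_simp
  have hVs : ∑ α ∈ T, V α ≤ S ^ m := by
    rw [hS, Finset.sum_pow_eq_sum_piAntidiag, Finset.piAntidiag_univ_fin_eq_antidiagonalTuple]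
    refine Finset.sum_le_sum fun α _ => ?_
    have : (1 : ℝ) ≤ (Nat.multinomial Finset.univ α : ℝ) := by
      exact_mod_cast Nat.multinomial_pos _ _
    exact le_mul_of_one_le_left (hV0 α) this
  have hm1 : (0 : ℝ) < m + 1 := by positivity
  have hconj : Real.HolderConjugate (((m : ℝ) + 1) / m) ((m : ℝ) + 1) := by
    rw [Real.holderConjugate_iff]
    constructor
    · rw [lt_div_iff₀ hm0]; linarith
    · field_simp
  have hH := Real.inner_le_Lp_mul_Lq_of_nonneg T hconj
    (f := fun α => U α ^ ((m : ℝ) / (m + 1))) (g := fun α => V α ^ ((1 : ℝ) / (m + 1)))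
    (fun α _ => Real.rpow_nonneg (hU0 α) _) (fun α _ => Real.rpow_nonneg (hV0 α) _)
  have e1 : ∀ α, (U α ^ ((m : ℝ) / (m + 1))) ^ (((m : ℝ) + 1) / m) = U α := by
    intro α
    rw [← Real.rpow_mul (hU0 α)]
    have : (m : ℝ) / (m + 1) * (((m : ℝ) + 1) / m) = 1 := by field_simp
    rw [this, Real.rpow_one]
  have e2 : ∀ α, (V α ^ ((1 : ℝ) / (m + 1))) ^ ((m : ℝ) + 1) = V α := by
    intro α
    rw [← Real.rpow_mul (hV0 α)]
    have : (1 : ℝ) / (m + 1) * ((m : ℝ) + 1) = 1 := by field_simp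
    rw [this, Real.rpow_one]
  simp only [e1, e2] at hH
  have hX : ∑ α ∈ T, x α ^ ((2 * m : ℝ) / (m + 1)) ≤
      (m * S) ^ (1 / (((m : ℝ) + 1) / m)) * (S ^ m) ^ (1 / ((m : ℝ) + 1)) := by
    calc ∑ α ∈ T, x α ^ ((2 * m : ℝ) / (m + 1))
        ≤ ∑ α ∈ T, U α ^ ((m : ℝ) / (m + 1)) * V α ^ ((1 : ℝ) / (m + 1)) := by
          refine Finset.sum_le_sum fun α hα => ?_
          have h1 : x α ^ ((2 * m : ℝ) / (m + 1)) = (x α ^ (2 * m)) ^ ((1 : ℝ) / (m + 1)) := by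
            rw [← Real.rpow_natCast, ← Real.rpow_mul (hx α)]
            congr 1
            push_cast; ring
          have h2 : U α ^ ((m : ℝ) / (m + 1)) = (U α ^ m) ^ ((1 : ℝ) / (m + 1)) := by
            rw [← Real.rpow_natCast, ← Real.rpow_mul (hU0 α)]
            congr 1
            ring
          rw [h1, h2, ← Real.mul_rpow (pow_nonneg (hU0 α) _) (hV0 α)]
          exact Real.rpow_le_rpow (pow_nonneg (hx α) _) (hpt α hα) (by positivity)
      _ ≤ _ := hH
      _ ≤ _ := by
          have a1 : 0 ≤ ∑ α ∈ T, U α := Finset.sum_nonneg fun α _ => hU0 α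
          have a2 : 0 ≤ ∑ α ∈ T, V α := Finset.sum_nonneg fun α _ => hV0 α
          gcongr
  have hX0 : 0 ≤ ∑ α ∈ T, x α ^ ((2 * m : ℝ) / (m + 1)) :=
    Finset.sum_nonneg fun α _ => Real.rpow_nonneg (hx α) _
  refine (Real.rpow_le_rpow hX0 hX (by positivity)).trans ?_
  apply le_of_eq
  rw [Real.mul_rpow (by positivity) (by positivity), ← Real.rpow_mul (by positivity),
    ← Real.rpow_mul (by positivity), ← Real.rpow_natCast S m, ← Real.rpow_mul hS0]
  have f1 : 1 / (((m : ℝ) + 1) / m) * (((m : ℝ) + 1) / (2 * m)) = 1 / 2 := by field_simp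
  have f2 : (m : ℝ) * (1 / ((m : ℝ) + 1) * (((m : ℝ) + 1) / (2 * m))) = 1 / 2 := by field_simp
  rw [f1, f2, ← Real.sqrt_eq_rpow, ← Real.sqrt_eq_rpow, Real.sqrt_mul hm0.le, mul_assoc,
    Real.mul_self_sqrt hS0]

lemma bh_shift {M : Type*} [AddCommMonoid M] (m N : ℕ) (l : Fin N) (F : (Fin N → ℕ) → M)
    (hF : ∀ α, α l = 0 → F α = 0) :
    ∑ β : Fin N → Fin m, (if ∑ j, (β j : ℕ) + 1 = m then F (fun j => β j + if j = l then 1 else 0) else 0)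
      = ∑ α ∈ Finset.Nat.antidiagonalTuple N m, F α := by
  rw [← Finset.sum_filter]
  refine Finset.sum_of_injOn (fun (β : Fin N → Fin m) j => (β j : ℕ) + if j = l then 1 else 0) ?_ ?_ ?_ ?_
  · intro β _ γ _ h
    funext j
    have := congrFun h j
    simp only [Nat.add_right_cancel_iff] at this
    exact Fin.ext this
  · intro β hβ
    simp only [Finset.coe_filter, Finset.mem_univ, true_and, Set.mem_ofPred_eq] at hβ
    simp only [Finset.mem_coe, Finset.Nat.mem_antidiagonalTuple, Finset.sum_add_distrib]
    simpa using hβ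
  · intro α hα hn
    refine hF α ?_
    by_contra h0
    apply hn
    rw [Finset.Nat.mem_antidiagonalTuple] at hα
    have hsplit : α l + ∑ j ∈ Finset.univ.erase l, α j = m := by
      rw [Finset.add_sum_erase _ _ (Finset.mem_univ l), hα]
    have hlt : ∀ j, α j - (if j = l then 1 else 0) < m := by
      intro j
      by_cases hj : j = l
      · subst hj; simp; omega
      · have : α j ≤ ∑ j ∈ Finset.univ.erase l, α j :=
          Finset.single_le_sum (f := α) (fun _ _ => Nat.zero_le _) (by simp [hj])
        simp only [hj, if_false]; omega
    have hback : ∀ j, α j - (if j = l then 1 else 0) + (if j = l then 1 else 0) = α j := by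
      intro j
      by_cases hj : j = l
      · subst hj; simp; omega
      · simp [hj]
    refine ⟨fun j => ⟨α j - (if j = l then 1 else 0), hlt j⟩, ?_, ?_⟩
    · simp only [Finset.coe_filter, Finset.mem_univ, true_and, Set.mem_ofPred_eq]
      have h1 : ∑ j, (α j - (if j = l then 1 else 0)) + ∑ j, (if j = l then 1 else 0) = m := by
        rw [← Finset.sum_add_distrib, ← hα]
        exact Finset.sum_congr rfl fun j _ => hback j
      simpa using h1
    · funext j
      exact hback j
  · intro β _
    rfl

/-- Harris-type bound for the gradient on the torus. -/
lemma bh_harris (m N : ℕ) (hm : 2 ≤ m) (c : (Fin N → ℕ) → ℂ) (B : ℝ)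
    (hB : ∀ z : Fin N → ℂ, (∀ j, ‖z j‖ ≤ 1) →
      ‖∑ α ∈ Finset.Nat.antidiagonalTuple N m, c α * ∏ j, z j ^ α j‖ ≤ B)
    (z : Fin N → ℂ) (hz : ∀ j, ‖z j‖ = 1) :
    ∑ l, ‖∑ α ∈ Finset.Nat.antidiagonalTuple N m, ((α l : ℂ) / m) * c α * ∏ j, z j ^ α j‖
      ≤ ((m : ℝ) / ((m : ℝ) - 1)) ^ (m - 1) * B := by
  have hm2 : (2 : ℝ) ≤ m := by exact_mod_cast hm
  have hm1 : (0 : ℝ) < (m : ℝ) - 1 := by linarith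
  set T := Finset.Nat.antidiagonalTuple N m with hT
  set E : Fin N → ℂ := fun l => ∑ α ∈ T, ((α l : ℂ) / m) * c α * ∏ j, z j ^ α j with hE
  have hy : ∀ l, ∃ y : ℂ, ‖y‖ ≤ 1 ∧ y * E l = (‖E l‖ : ℂ) := by
    intro l
    by_cases h0 : E l = 0
    · exact ⟨0, by simp, by simp [h0]⟩
    · refine ⟨(‖E l‖ : ℂ) / E l, ?_, ?_⟩
      · rw [norm_div, Complex.norm_real, norm_norm, div_self (by simpa using h0)]
      · field_simp
  choose y hy1 hy2 using hy
  set Q : ℂ → ℂ := fun t => ∑ α ∈ T, c α * ∏ j, (z j * (1 + t * y j)) ^ α j with hQ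
  have hder : HasDerivAt Q (m * ∑ l, y l * E l) 0 := by
    have h1 : ∀ α : Fin N → ℕ, HasDerivAt (fun t : ℂ => ∏ j, (z j * (1 + t * y j)) ^ α j)
        (∑ l, (α l : ℂ) * y l * ∏ j, z j ^ α j) 0 := by
      intro α
      have h2 : ∀ l ∈ (Finset.univ : Finset (Fin N)), HasDerivAt (fun t : ℂ => (z l * (1 + t * y l)) ^ α l)
          ((α l : ℂ) * (z l) ^ (α l - 1) * (z l * y l)) 0 := by
        intro l _
        have h3 : HasDerivAt (fun t : ℂ => z l * (1 + t * y l)) (z l * y l) 0 := by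
          have := (((hasDerivAt_id (0:ℂ)).mul_const (y l)).const_add 1).const_mul (z l)
          simpa using this
        refine (h3.fun_pow (α l)).congr_deriv ?_
        simp
      refine (HasDerivAt.fun_finsetProd h2).congr_deriv ?_
      symm
      refine Finset.sum_congr rfl fun l _ => ?_
      simp only [zero_mul, add_zero, mul_one, smul_eq_mul]
      rw [← Finset.prod_erase_mul _ _ (Finset.mem_univ l)]
      by_cases h0 : α l = 0
      · simp [h0]
      · have : z l ^ α l = z l ^ (α l - 1) * z l := by
          rw [← pow_succ]; congr 1; omega
        rw [this]; ring
    refine (HasDerivAt.fun_sum (u := T) (fun α _ => (h1 α).const_mul (c α))).congr_deriv ?_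
    symm
    have hmc : (m : ℂ) ≠ 0 := by
      have : m ≠ 0 := by omega
      exact_mod_cast this
    simp only [hE, Finset.mul_sum]
    rw [Finset.sum_comm]
    refine Finset.sum_congr rfl fun α _ => Finset.sum_congr rfl fun l _ => ?_
    field_simp
  have hQd : Differentiable ℂ Q := by
    rw [hQ]; fun_prop
  have hscale : ∀ ρ : ℝ, 0 < ρ → ∀ w : Fin N → ℂ, (∀ j, ‖w j‖ ≤ ρ) →
      ‖∑ α ∈ T, c α * ∏ j, w j ^ α j‖ ≤ ρ ^ m * B := by
    intro ρ hρ w hw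
    have h1 := hB (fun j => w j / ρ) (by
      intro j
      rw [norm_div, Complex.norm_real, Real.norm_eq_abs, abs_of_pos hρ, div_le_one hρ]
      exact hw j)
    have hρc : (ρ : ℂ) ≠ 0 := by exact_mod_cast hρ.ne'
    have h2 : ∑ α ∈ T, c α * ∏ j, w j ^ α j = (ρ : ℂ) ^ m * ∑ α ∈ T, c α * ∏ j, (w j / ρ) ^ α j := by
      rw [Finset.mul_sum]
      refine Finset.sum_congr rfl fun α hα => ?_
      have h3 : (ρ : ℂ) ^ m = ∏ j, (ρ : ℂ) ^ α j := by
        rw [Finset.prod_pow_eq_pow_sum, Finset.Nat.mem_antidiagonalTuple.1 hα]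
      rw [h3, mul_left_comm, ← Finset.prod_mul_distrib]
      congr 1
      refine Finset.prod_congr rfl fun j _ => ?_
      rw [← mul_pow, mul_div_cancel₀ _ hρc]
    rw [h2, norm_mul, norm_pow, Complex.norm_real, Real.norm_eq_abs, abs_of_pos hρ]
    exact mul_le_mul_of_nonneg_left h1 (by positivity)
  set r : ℝ := 1 / ((m : ℝ) - 1) with hr
  have hr0 : 0 < r := by positivity
  have hC : ∀ t ∈ Metric.sphere (0 : ℂ) r, ‖Q t‖ ≤ (1 + r) ^ m * B := by
    intro t ht
    have ht' : ‖t‖ = r := by simpa using ht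
    refine hscale (1 + r) (by positivity) _ ?_
    intro j
    rw [norm_mul, hz j, one_mul]
    refine (norm_add_le _ _).trans ?_
    rw [norm_one, norm_mul, ht']
    have := hy1 j
    nlinarith
  have hcau := Complex.norm_deriv_le_of_forall_mem_sphere_norm_le hr0 hQd.diffContOnCl hC
  rw [hder.deriv] at hcau
  have hsumE : ∑ l, y l * E l = ((∑ l, ‖E l‖ : ℝ) : ℂ) := by
    push_cast
    exact Finset.sum_congr rfl fun l _ => hy2 l
  have hE0 : 0 ≤ ∑ l, ‖E l‖ := Finset.sum_nonneg fun l _ => norm_nonneg _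
  rw [hsumE, norm_mul, Complex.norm_real, Real.norm_eq_abs, abs_of_nonneg hE0, Complex.norm_natCast] at hcau
  have hm0 : (0 : ℝ) < m := by linarith
  have hfin : (1 + r) ^ m * B / r = m * (((m : ℝ) / ((m : ℝ) - 1)) ^ (m - 1) * B) := by
    have e1 : 1 + r = (m : ℝ) / ((m : ℝ) - 1) := by rw [hr]; field_simp; ring
    have e2 : ((m : ℝ) / ((m : ℝ) - 1)) ^ m = ((m : ℝ) / ((m : ℝ) - 1)) ^ (m - 1) * ((m : ℝ) / ((m : ℝ) - 1)) := by
      rw [← pow_succ]; congr 1; omega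
    rw [e1, e2, hr]
    field_simp
  rw [hfin] at hcau
  exact le_of_mul_le_mul_left hcau hm0

lemma bh_sup_le (m N : ℕ) (c : (Fin N → ℕ) → ℂ) (z : Fin N → ℂ) (hz : ∀ j, ‖z j‖ ≤ 1) :
    ‖∑ α ∈ Finset.Nat.antidiagonalTuple N m, c α * ∏ j, z j ^ α j‖ ≤
      ⨆ z ∈ {z : Fin N → ℂ | ∀ j, ‖z j‖ ≤ 1},
          ‖∑ α ∈ Finset.Nat.antidiagonalTuple N m, c α * ∏ j, z j ^ α j‖ := by
  have hb : ∀ z : Fin N → ℂ, (∀ j, ‖z j‖ ≤ 1) →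
      ‖∑ α ∈ Finset.Nat.antidiagonalTuple N m, c α * ∏ j, z j ^ α j‖ ≤
        ∑ α ∈ Finset.Nat.antidiagonalTuple N m, ‖c α‖ := by
    intro z hz
    refine (norm_sum_le _ _).trans (Finset.sum_le_sum fun α _ => ?_)
    rw [norm_mul, norm_prod]
    refine mul_le_of_le_one_right (norm_nonneg _) (Finset.prod_le_one (fun j _ => norm_nonneg _) ?_)
    intro j _
    rw [norm_pow]
    exact pow_le_one₀ (norm_nonneg _) (hz j)
  have hbdd : BddAbove (Set.range fun z : Fin N → ℂ => ⨆ (_ : z ∈ {z : Fin N → ℂ | ∀ j, ‖z j‖ ≤ 1}),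
      ‖∑ α ∈ Finset.Nat.antidiagonalTuple N m, c α * ∏ j, z j ^ α j‖) := by
    refine ⟨∑ α ∈ Finset.Nat.antidiagonalTuple N m, ‖c α‖, ?_⟩
    rintro _ ⟨w, rfl⟩
    refine Real.iSup_le (fun hw => hb w hw) (Finset.sum_nonneg fun α _ => norm_nonneg _)
  refine le_trans ?_ (le_ciSup hbdd z)
  have : Nonempty (z ∈ {z : Fin N → ℂ | ∀ j, ‖z j‖ ≤ 1}) := ⟨hz⟩
  simp only [ciSup_const, le_refl]

lemma bh_const (m : ℕ) (hm : 2 ≤ m) :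
    √(m : ℝ) * √(2 ^ (m - 1)) ≤ 2 ^ ((m : ℝ) / 2) * (m : ℝ) ^ (((m : ℝ) - 1) / (2 * m)) := by
  have hm0 : (0 : ℝ) < m := by
    have : 0 < m := by omega
    exact_mod_cast this
  have h1 : √(m : ℝ) = (m : ℝ) ^ (((m : ℝ) - 1) / (2 * m)) * (m : ℝ) ^ (1 / (2 * (m : ℝ))) := by
    rw [← Real.rpow_add hm0, Real.sqrt_eq_rpow]
    congr 1
    field_simp; ring
  have h2 : (m : ℝ) ^ (1 / (2 * (m : ℝ))) ≤ √2 := by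
    have h3 : (m : ℝ) ≤ 2 ^ m := by exact_mod_cast (Nat.lt_two_pow_self).le
    refine (Real.rpow_le_rpow hm0.le h3 (by positivity)).trans (le_of_eq ?_)
    rw [← Real.rpow_natCast, ← Real.rpow_mul (by norm_num), Real.sqrt_eq_rpow]
    congr 1
    field_simp
  have h4 : (2 : ℝ) ^ ((m : ℝ) / 2) = √2 * √(2 ^ (m - 1)) := by
    rw [← Real.sqrt_mul (by norm_num), ← pow_succ', Real.sqrt_eq_rpow, ← Real.rpow_natCast,
      ← Real.rpow_mul (by norm_num)]
    congr 1
    have : m - 1 + 1 = m := by omega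
    rw [this]; ring
  rw [h4, h1]
  have h5 : 0 ≤ (m : ℝ) ^ (((m : ℝ) - 1) / (2 * m)) := by positivity
  calc _ ≤ (m : ℝ) ^ (((m : ℝ) - 1) / (2 * m)) * √2 * √(2 ^ (m - 1)) := by gcongr
    _ = _ := by ring

/-- **Hypercontractive Bohnenblust–Hille inequality** with the constant of the paper.
For `m ≥ 2`, `N ≥ 1` and an `m`-homogeneous polynomial `P(z) = ∑_{|α|=m} c_α z^α`:
`(∑_{|α|=m} |c_α|^{2m/(m+1)})^{(m+1)/(2m)}
  ≤ 2^{m/2} m^{(m-1)/(2m)} (m/(m-1))^{m-1} sup_{polydisc} |P|`. -/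
theorem bohnenblust_hille (m N : ℕ) (hm : 2 ≤ m) (hN : 1 ≤ N)
    (c : (Fin N → ℕ) → ℂ) :
    (∑ α ∈ Finset.Nat.antidiagonalTuple N m,
        ‖c α‖ ^ ((2 * m : ℝ) / (m + 1))) ^ (((m : ℝ) + 1) / (2 * m))
      ≤ 2 ^ ((m : ℝ) / 2) * (m : ℝ) ^ (((m : ℝ) - 1) / (2 * m)) *
          ((m : ℝ) / ((m : ℝ) - 1)) ^ (m - 1) *
        ⨆ z ∈ {z : Fin N → ℂ | ∀ j, ‖z j‖ ≤ 1},
          ‖∑ α ∈ Finset.Nat.antidiagonalTuple N m, c α * ∏ j, z j ^ α j‖ := by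
  have hB := bh_sup_le m N c
  set B := ⨆ z ∈ {z : Fin N → ℂ | ∀ j, ‖z j‖ ≤ 1},
          ‖∑ α ∈ Finset.Nat.antidiagonalTuple N m, c α * ∏ j, z j ^ α j‖ with hBdef
  have hm2 : (2 : ℝ) ≤ m := by exact_mod_cast hm
  have hm1 : (0 : ℝ) < (m : ℝ) - 1 := by linarith
  set s : Fin N → ℝ := fun l =>
    √(∑ α ∈ Finset.Nat.antidiagonalTuple N m, ((α l : ℝ) / m) ^ 2 * ‖c α‖ ^ 2) with hs
  have hhol := bh_holder m N (by omega) (fun α => ‖c α‖) (fun α => norm_nonneg _) s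
    (fun l => Real.sqrt_nonneg _)
    (fun l => (Real.sq_sqrt (Finset.sum_nonneg fun α _ => by positivity)).symm)
  set C0 := ((m : ℝ) / ((m : ℝ) - 1)) ^ (m - 1) * B with hC0
  have hmul := bh_multi (L := Fin N) m N
    (fun l β => if ∑ j, (β j : ℕ) + 1 = m then
      (fun α : Fin N → ℕ => ((α l : ℂ) / m) * c α) (fun j => β j + if j = l then 1 else 0) else 0) C0 ?_
  · have hS : ∑ l, s l ≤ √(2 ^ (m - 1)) * C0 := by
      have h1 : ∀ l, √(∑ β : Fin N → Fin m, ‖(if ∑ j, (β j : ℕ) + 1 = m then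
          (fun α : Fin N → ℕ => ((α l : ℂ) / m) * c α) (fun j => β j + if j = l then 1 else 0) else 0)‖ ^ 2
            / 2 ^ (∑ j, (β j : ℕ))) = s l / √(2 ^ (m - 1)) := by
        intro l
        rw [hs, ← Real.sqrt_div' _ (by positivity), Finset.sum_div]
        congr 1
        rw [← bh_shift m N l (fun α => ((α l : ℝ) / m) ^ 2 * ‖c α‖ ^ 2 / 2 ^ (m - 1))
          (by intro α h; simp [h])]
        refine Finset.sum_congr rfl fun β _ => ?_
        split_ifs with h
        · have : ∑ j, (β j : ℕ) = m - 1 := by omega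
          rw [this, norm_mul, mul_pow, norm_div, Complex.norm_natCast, Complex.norm_natCast]
        · simp
      rw [Finset.sum_congr rfl (fun l _ => h1 l), ← Finset.sum_div] at hmul
      rw [div_le_iff₀ (by positivity)] at hmul
      rw [mul_comm]; exact hmul
    have hC00 : 0 ≤ C0 := by
      refine mul_nonneg (by positivity) ?_
      exact (norm_nonneg _).trans (hB (fun _ => 0) (by simp))
    calc _ ≤ √m * ∑ l, s l := hhol
      _ ≤ √m * (√(2 ^ (m - 1)) * C0) := by gcongr
      _ = (√m * √(2 ^ (m - 1))) * C0 := by ring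
      _ ≤ (2 ^ ((m : ℝ) / 2) * (m : ℝ) ^ (((m : ℝ) - 1) / (2 * m))) * C0 :=
          mul_le_mul_of_nonneg_right (bh_const m hm) hC00
      _ = _ := by rw [hC0]; ring
  · intro z hz
    refine le_trans (le_of_eq ?_) (bh_harris m N hm c B hB z hz)
    refine Finset.sum_congr rfl fun l _ => ?_
    rw [← bh_shift m N l (fun α => ((α l : ℂ) / m) * c α * ∏ j, z j ^ α j) (by intro α h; simp [h])]
    rw [← one_mul ‖∑ β : Fin N → Fin m, _ * _‖, ← hz l, ← norm_mul, Finset.mul_sum]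
    congr 1
    refine Finset.sum_congr rfl fun β _ => ?_
    split_ifs with h
    · have : ∏ j, z j ^ ((β j : ℕ) + if j = l then 1 else 0) = z l * ∏ j, z j ^ (β j : ℕ) := by
        simp only [pow_add, Finset.prod_mul_distrib]
        rw [mul_comm]
        congr 1
        simp
      rw [this]; ring
    · simp
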